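/- arXiv:1512.00715 — 7 statements merged into one kernel-verified Lean document; each statement's English description precedes it below -/
import Mathlib

section
/- Let q, r, ξ₀ be real numbers with q ≠ 0 and r² − 4q > 0, and set s = √(r² − 4q). Then on any open interval of ξ where −(s·tanh(s(ξ+ξ₀)/2) + r)/(2q) > 0, the function Φ(ξ) = ln(−(s·tanh(s(ξ+ξ₀)/2) + r)/(2q)) is differentiable and satisfies the auxiliary ODE Φ'(ξ) = exp(−Φ(ξ)) + q·exp(Φ(ξ)) + r. -/
/-!
The function `u = exp Φ` turns the auxiliary ODE `Φ' = p exp (-Φ) + q exp Φ + r` into the Riccati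
equation `u' = p + r u + q u²`. Completing the square with `y = -(2 q u + r)` reduces the latter to
`y' = (Δ - y²) / 2`, where `Δ = r² - 4 q p`, and for `Δ = s²` this is solved by rescaling
`tanh' = 1 - tanh²`.
-/

theorem hasDerivAt_tanh (x : ℝ) : HasDerivAt Real.tanh (1 - Real.tanh x ^ 2) x := by
  have hcosh : Real.cosh x ≠ 0 := (Real.cosh_pos x).ne'
  have hquot : HasDerivAt (fun y => Real.sinh y / Real.cosh y) _ x :=
    (Real.hasDerivAt_sinh x).fun_div (Real.hasDerivAt_cosh x) hcosh
  simp only [← Real.tanh_eq_sinh_div_cosh] at hquot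
  refine hquot.congr_deriv ?_
  rw [Real.tanh_eq_sinh_div_cosh]
  field_simp

theorem hasDerivAt_mul_tanh_mul_add_div_two (s x₀ x : ℝ) :
    HasDerivAt (fun x' => s * Real.tanh (s * (x' + x₀) / 2))
      ((s ^ 2 - (s * Real.tanh (s * (x + x₀) / 2)) ^ 2) / 2) x := by
  have hinner : HasDerivAt (fun x' => s * (x' + x₀) / 2) (s * 1 / 2) x :=
    (((hasDerivAt_id x).add_const x₀).const_mul s).div_const 2
  refine (((hasDerivAt_tanh _).comp x hinner).const_mul s).congr_deriv ?_
  ring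

theorem hasDerivAt_riccati_of_discrim {𝕜 : Type*} [NontriviallyNormedField 𝕜] [NeZero (2 : 𝕜)]
    {p q r x : 𝕜} {y : 𝕜 → 𝕜} (hq : q ≠ 0)
    (hy : HasDerivAt y ((discrim q r p - y x ^ 2) / 2) x) :
    HasDerivAt (fun x' => -(y x' + r) / (2 * q))
      (p + r * (-(y x + r) / (2 * q)) + q * (-(y x + r) / (2 * q)) ^ 2) x := by
  have h2 : (2 : 𝕜) ≠ 0 := two_ne_zero
  refine ((hy.add_const r).fun_neg.div_const (2 * q)).congr_deriv ?_
  rw [discrim]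
  field_simp
  ring

theorem hasDerivAt_log_of_riccati {p q r x : ℝ} {u : ℝ → ℝ}
    (hu : HasDerivAt u (p + r * u x + q * u x ^ 2) x) (hpos : 0 < u x) :
    HasDerivAt (fun x' => Real.log (u x'))
      (p * Real.exp (-Real.log (u x)) + q * Real.exp (Real.log (u x)) + r) x := by
  refine (hu.log hpos.ne').congr_deriv ?_
  rw [Real.exp_neg, Real.exp_log hpos]
  field_simp
  ring

/-- Type 1 solution (9a) of the auxiliary ODE Φ' = exp(-Φ) + q·exp(Φ) + r
with p = 1, q ≠ 0 and r² - 4q > 0. -/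
theorem stmt_0 (q r ξ₀ : ℝ) (hq : q ≠ 0) (hdisc : r ^ 2 - 4 * q > 0)
    (s : ℝ) (hs : s = Real.sqrt (r ^ 2 - 4 * q)) (a b : ℝ)
    (hpos : ∀ ξ ∈ Set.Ioo a b,
      -(s * Real.tanh (s * (ξ + ξ₀) / 2) + r) / (2 * q) > 0) :
    ∀ ξ ∈ Set.Ioo a b,
      HasDerivAt (fun ξ' => Real.log (-(s * Real.tanh (s * (ξ' + ξ₀) / 2) + r) / (2 * q)))
        (Real.exp (-Real.log (-(s * Real.tanh (s * (ξ + ξ₀) / 2) + r) / (2 * q)))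
          + q * Real.exp (Real.log (-(s * Real.tanh (s * (ξ + ξ₀) / 2) + r) / (2 * q)))
          + r) ξ := by
  intro ξ hξ
  have hdiscrim : s ^ 2 = discrim q r 1 := by
    rw [hs, Real.sq_sqrt hdisc.le, discrim, mul_one]
  have htanh := hasDerivAt_mul_tanh_mul_add_div_two s ξ₀ ξ
  rw [hdiscrim] at htanh
  have hriccati := hasDerivAt_riccati_of_discrim hq htanh
  simpa only [one_mul] using hasDerivAt_log_of_riccati hriccati (hpos ξ hξ)
end

section
/- Let p > 0, q < 0 and ξ₀ be real numbers. Then for all ξ with ξ + ξ₀ > 0, the function Φ(ξ) = ln(√(−p/q)·coth(√(−pq)(ξ+ξ₀))) is differentiable and satisfies the auxiliary ODE Φ'(ξ) = p·exp(−Φ(ξ)) + q·exp(Φ(ξ)) (i.e. the case r = 0 with pq < 0). -/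
/-!
The substitution `y = exp Φ` turns `Φ' = p * exp (-Φ) + q * exp Φ + r` into the Riccati equation
`y' = p + q * y ^ 2 + r * y`. Since `coth' = 1 - coth ^ 2`, the function
`y ξ = a * coth (b * (ξ + c))` solves it for `r = 0` as soon as `a * b = p` and `q * a = -b`;
for `q < 0 ≤ p` these two equations are solved by `a = √(-p / q)` and `b = √(-(p * q))`.
-/

section

open Real

/-- The real hyperbolic cotangent, extended by the value `0` at its pole `0`. -/
noncomputable def coth (x : ℝ) : ℝ := cosh x / sinh x

theorem coth_pos {x : ℝ} (hx : 0 < x) : 0 < coth x :=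
  div_pos (cosh_pos x) (sinh_pos_iff.mpr hx)

theorem hasDerivAt_coth {x : ℝ} (hx : x ≠ 0) : HasDerivAt coth (1 - coth x ^ 2) x := by
  have hsinh : sinh x ≠ 0 := sinh_ne_zero.mpr hx
  refine ((hasDerivAt_cosh x).div (hasDerivAt_sinh x) hsinh).congr_deriv ?_
  rw [coth]
  field_simp

theorem hasDerivAt_const_mul_coth {a b c q x : ℝ} (hx : b * (x + c) ≠ 0)
    (hqa : q * a = -b) :
    HasDerivAt (fun t ↦ a * coth (b * (t + c)))
      (a * b + q * (a * coth (b * (x + c))) ^ 2) x := by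
  have hinner : HasDerivAt (fun t ↦ b * (t + c)) b x := by
    simpa only [mul_one] using ((hasDerivAt_id' x).add_const c).const_mul b
  refine (((hasDerivAt_coth hx).comp x hinner).const_mul a).congr_deriv ?_
  linear_combination (-a * coth (b * (x + c)) ^ 2) * hqa

theorem hasDerivAt_log_of_riccati_s7 {p q r x : ℝ} {y : ℝ → ℝ}
    (hy : HasDerivAt y (p + q * y x ^ 2 + r * y x) x) (hpos : 0 < y x) :
    HasDerivAt (fun t ↦ log (y t)) (p * exp (-log (y x)) + q * exp (log (y x)) + r) x := by
  refine (hy.log hpos.ne').congr_deriv ?_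
  rw [exp_neg, exp_log hpos]
  field_simp

theorem mul_sqrt_neg_div (p : ℝ) {q : ℝ} (hq : q < 0) :
    q * √(-p / q) = -√(-(p * q)) := by
  have hfactor : -(p * q) = q ^ 2 * (-p / q) := by field_simp
  rw [hfactor, sqrt_mul (sq_nonneg q), sqrt_sq_eq_abs, abs_of_neg hq, neg_mul, neg_neg]

theorem sqrt_neg_div_mul_sqrt_neg_mul {p q : ℝ} (hp : 0 ≤ p) (hq : q < 0) :
    √(-p / q) * √(-(p * q)) = p := by
  have hnonneg : 0 ≤ -p / q := div_nonneg_of_nonpos (neg_nonpos.mpr hp) hq.le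
  calc √(-p / q) * √(-(p * q))
      = -q * √(-p / q) ^ 2 := by
        linear_combination √(-p / q) * mul_sqrt_neg_div p hq
    _ = -q * (-p / q) := by rw [sq_sqrt hnonneg]
    _ = p := by rw [neg_mul, mul_div_cancel₀ _ hq.ne, neg_neg]

end

/-- Type 2 solution (9h) of the auxiliary ODE Φ' = p·exp(-Φ) + q·exp(Φ)
with r = 0 and p > 0, q < 0, where coth θ = cosh θ / sinh θ. -/
theorem stmt_7 (p q ξ₀ : ℝ) (hp : p > 0) (hq : q < 0) :
    ∀ ξ : ℝ, ξ + ξ₀ > 0 →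
      HasDerivAt
        (fun ξ' => Real.log (Real.sqrt (-p / q) *
          (Real.cosh (Real.sqrt (-(p * q)) * (ξ' + ξ₀)) / Real.sinh (Real.sqrt (-(p * q)) * (ξ' + ξ₀)))))
        (p * Real.exp (-Real.log (Real.sqrt (-p / q) *
            (Real.cosh (Real.sqrt (-(p * q)) * (ξ + ξ₀)) / Real.sinh (Real.sqrt (-(p * q)) * (ξ + ξ₀)))))
          + q * Real.exp (Real.log (Real.sqrt (-p / q) *
            (Real.cosh (Real.sqrt (-(p * q)) * (ξ + ξ₀)) / Real.sinh (Real.sqrt (-(p * q)) * (ξ + ξ₀)))))) ξ := by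
  intro ξ hξ
  let a := √(-p / q)
  let b := √(-(p * q))
  let y : ℝ → ℝ := fun t ↦ a * coth (b * (t + ξ₀))
  have ha : 0 < a := Real.sqrt_pos.mpr (div_pos_of_neg_of_neg (neg_neg_of_pos hp) hq)
  have hb : 0 < b := Real.sqrt_pos.mpr (neg_pos.mpr (mul_neg_of_pos_of_neg hp hq))
  have harg : 0 < b * (ξ + ξ₀) := mul_pos hb hξ
  have hpos : 0 < y ξ := mul_pos ha (coth_pos harg)
  have hriccati : HasDerivAt y (p + q * y ξ ^ 2 + 0 * y ξ) ξ := by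
    refine (hasDerivAt_const_mul_coth harg.ne' (mul_sqrt_neg_div p hq)).congr_deriv ?_
    rw [sqrt_neg_div_mul_sqrt_neg_mul hp.le hq, zero_mul, add_zero]
  exact (hasDerivAt_log_of_riccati_s7 hriccati hpos).congr_deriv (add_zero _)
end

section
/- Let p, q, r, k, A be real numbers with r² − 4pq ≥ 0 and set s = √(r² − 4pq). Suppose Φ is a differentiable real-valued function on an open interval I satisfying the auxiliary ODE Φ'(ξ) = p·exp(−Φ(ξ)) + q·exp(Φ(ξ)) + r for all ξ ∈ I. Define w(ξ) = A·k·(r + s)/2 + p·A·k·exp(−Φ(ξ)) and c = −A·k²·s. Then c·w(ξ) + k·w(ξ)² + A·k²·w'(ξ) = 0 for all ξ ∈ I. -/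
/-!
The substitution `y = p * exp (-Φ)` turns the auxiliary equation into the Riccati equation
`y' = -(y² + r y + p q)`. Its constant solutions are `-α` for the roots `α` of `α² - r α + p q`,
and shifting by one of them, `v = α + y`, removes the constant term: `v' = (2 α - r) v - v²`.
This is the once-integrated Burgers equation up to the scaling `w = A k v`, and the wave speed is
read off from `2 α - r = s` for the root `α = (r + s) / 2`.
-/

section Riccati

variable {𝕜 R : Type*} [NontriviallyNormedField 𝕜] [NormedCommRing R] [NormedAlgebra 𝕜 R] {ξ : 𝕜}

theorem hasDerivAt_const_add_of_riccati {y : 𝕜 → R} {r m α : R}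
    (hy : HasDerivAt y (-(y ξ ^ 2 + r * y ξ + m)) ξ) (hα : α ^ 2 - r * α + m = 0) :
    HasDerivAt (fun x ↦ α + y x) ((2 * α - r) * (α + y ξ) - (α + y ξ) ^ 2) ξ := by
  refine (hy.const_add α).congr_deriv ?_
  linear_combination -hα

theorem burgers_of_hasDerivAt_logistic {v : 𝕜 → R} {s : R} (A k : R)
    (hv : HasDerivAt v (s * v ξ - v ξ ^ 2) ξ) :
    -(A * k ^ 2 * s) * (A * k * v ξ) + k * (A * k * v ξ) ^ 2
      + A * k ^ 2 * deriv (fun x ↦ A * k * v x) ξ = 0 := by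
  rw [(hv.const_mul (A * k)).deriv]
  ring

end Riccati

section Exponential

open NormedSpace (exp)

variable {𝕜 F : Type*} [NontriviallyNormedField 𝕜] [RCLike F] [NormedAlgebra 𝕜 F] {ξ : 𝕜}
  {Φ : 𝕜 → F} {p q r : F}

theorem hasDerivAt_mul_exp_neg_riccati
    (hΦ : HasDerivAt Φ (p * exp (-Φ ξ) + q * exp (Φ ξ) + r) ξ) :
    HasDerivAt (fun x ↦ p * exp (-Φ x))
      (-((p * exp (-Φ ξ)) ^ 2 + r * (p * exp (-Φ ξ)) + p * q)) ξ := by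
  have exp_neg_mul_exp : exp (-Φ ξ) * exp (Φ ξ) = 1 := by
    rw [← NormedSpace.exp_add, neg_add_cancel, NormedSpace.exp_zero]
  refine ((hasDerivAt_exp.comp ξ hΦ.neg).const_mul p).congr_deriv ?_
  linear_combination -p * q * exp_neg_mul_exp

theorem stmt_9_general {s : F} (A k : F) (hs : s ^ 2 = r ^ 2 - 4 * p * q)
    (hΦ : HasDerivAt Φ (p * exp (-Φ ξ) + q * exp (Φ ξ) + r) ξ) :
    let w : 𝕜 → F := fun x ↦ A * k * (r + s) / 2 + p * A * k * exp (-Φ x)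
    let c : F := -(A * k ^ 2 * s)
    c * w ξ + k * w ξ ^ 2 + A * k ^ 2 * deriv w ξ = 0 := by
  intro w c
  have root : ((r + s) / 2) ^ 2 - r * ((r + s) / 2) + p * q = 0 := by
    linear_combination hs / 4
  have logistic := hasDerivAt_const_add_of_riccati (hasDerivAt_mul_exp_neg_riccati hΦ) root
  rw [show 2 * ((r + s) / 2) - r = s by ring] at logistic
  have w_eq : w = fun x ↦ A * k * ((r + s) / 2 + p * exp (-Φ x)) := by
    funext x
    ring
  rw [w_eq]
  exact burgers_of_hasDerivAt_logistic A k logistic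

end Exponential

/-- The ansatz w = A·k·(r+s)/2 + p·A·k·exp(-Φ) with wave speed c = -A·k²·s
solves the once-integrated traveling-wave Burgers equation
c·w + k·w² + A·k²·w' = 0, provided Φ solves the auxiliary ODE. -/
theorem stmt_9 (p q r k A : ℝ) (hdisc : r ^ 2 - 4 * p * q ≥ 0)
    (s : ℝ) (hs : s = Real.sqrt (r ^ 2 - 4 * p * q))
    (a b : ℝ) (Φ : ℝ → ℝ)
    (hΦ : ∀ ξ ∈ Set.Ioo a b,
      HasDerivAt Φ (p * Real.exp (-Φ ξ) + q * Real.exp (Φ ξ) + r) ξ)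
    (w : ℝ → ℝ)
    (hw : w = fun ξ => A * k * (r + s) / 2 + p * A * k * Real.exp (-Φ ξ))
    (c : ℝ) (hc : c = -(A * k ^ 2 * s)) :
    ∀ ξ ∈ Set.Ioo a b, c * w ξ + k * w ξ ^ 2 + A * k ^ 2 * deriv w ξ = 0 := by
  intro ξ hξ
  rw [Real.exp_eq_exp_ℝ] at hΦ hw
  subst hw hc
  exact stmt_9_general A k (hs ▸ Real.sq_sqrt hdisc) (hΦ ξ hξ)
end

section
/- Let p, q, r, k be real numbers. Suppose Φ is a differentiable real-valued function on an open interval I satisfying the auxiliary ODE Φ'(ξ) = p·exp(−Φ(ξ)) + q·exp(Φ(ξ)) + r for all ξ ∈ I. Define V(ξ) = (k/2)·r + k·p·exp(−Φ(ξ)) and c = −k³·p·q + (1/4)·k³·r². Then V is twice differentiable on I and −c·V'(ξ) + (1/2)·k²·V(ξ)·V''(ξ) + 2k·V(ξ)²·V'(ξ) + k²·V'(ξ)² = 0 for all ξ ∈ I. -/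
/-!
Completing the square in the Riccati equation `E' = -(p E² + r E + q)` satisfied by `E = exp (-Φ)`
shows that `u = r / 2 + p E` satisfies `u' = l - u²` with `l = r² / 4 - p q`. Hence
`u'' = -2 u u'`, and for `V = k u`, `c = k³ l` the left-hand side of the foam drainage equation is
`k⁴ u' (-l - u² + 2 u² + u')`, which vanishes by the Riccati equation.
-/

open Filter
open scoped Topology

section

variable {𝕜 F : Type*} [NontriviallyNormedField 𝕜] [NontriviallyNormedField F] [NormedAlgebra 𝕜 F]
  {x : 𝕜}

/-- `V` solves at `ξ` the travelling-wave reduction of the foam drainage equation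
`∂V/∂t = (1/2) V ∂²V/∂x² + 2 V² ∂V/∂x + (∂V/∂x)²` under the wave variable `ξ = k x + c t`. Being
twice differentiable at `ξ` is part of the notion, so that no `deriv` takes a junk value. -/
def IsFoamDrainageWaveAt (k c : F) (V : 𝕜 → F) (ξ : 𝕜) : Prop :=
  DifferentiableAt 𝕜 V ξ ∧ DifferentiableAt 𝕜 (deriv V) ξ ∧
    -c * deriv V ξ + 1 / 2 * k ^ 2 * V ξ * deriv (deriv V) ξ
      + 2 * k * V ξ ^ 2 * deriv V ξ + k ^ 2 * deriv V ξ ^ 2 = 0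

theorem hasDerivAt_deriv_of_autonomous {u : 𝕜 → F} {f : F → F} {f' : F}
    (hu : ∀ᶠ y in 𝓝 x, HasDerivAt u (f (u y)) y) (hf : HasDerivAt f f' (u x)) :
    HasDerivAt (deriv u) (f' * f (u x)) x :=
  (hf.comp x hu.self_of_nhds).congr_of_eventuallyEq (hu.mono fun _ hy => hy.deriv)

theorem hasDerivAt_deriv_of_riccati {u : 𝕜 → F} {l : F}
    (hu : ∀ᶠ y in 𝓝 x, HasDerivAt u (l - u y ^ 2) y) :
    HasDerivAt (deriv u) (-(2 * u x) * (l - u x ^ 2)) x := by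
  have hf : HasDerivAt (fun v : F => l - v ^ 2) (-(2 * u x)) (u x) := by
    simpa using (hasDerivAt_pow 2 (u x)).const_sub l
  exact hasDerivAt_deriv_of_autonomous hu hf

theorem isFoamDrainageWaveAt_of_riccati [NeZero (2 : F)] (k : F) {u : 𝕜 → F} {l : F}
    (hu : ∀ᶠ y in 𝓝 x, HasDerivAt u (l - u y ^ 2) y) :
    IsFoamDrainageWaveAt k (k ^ 3 * l) (fun y => k * u y) x := by
  have hV : HasDerivAt (fun y => k * u y) (k * (l - u x ^ 2)) x := hu.self_of_nhds.const_mul k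
  have hV' : HasDerivAt (deriv fun y => k * u y) (k * (-(2 * u x) * (l - u x ^ 2))) x := by
    rw [deriv_const_mul_field']
    exact (hasDerivAt_deriv_of_riccati hu).const_mul k
  refine ⟨hV.differentiableAt, hV'.differentiableAt, ?_⟩
  rw [hV.deriv, hV'.deriv]
  field_simp
  ring

theorem hasDerivAt_complete_square_of_riccati [NeZero (2 : F)] {E : 𝕜 → F} {p q r : F}
    (hE : HasDerivAt E (-(p * E x ^ 2 + r * E x + q)) x) :
    HasDerivAt (fun y => r / 2 + p * E y) ((r / 2) ^ 2 - p * q - (r / 2 + p * E x) ^ 2) x := by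
  refine ((hE.const_mul p).const_add (r / 2)).congr_deriv ?_
  field_simp
  ring

end

section

variable {𝕜 F : Type*} [NontriviallyNormedField 𝕜] [RCLike F] [NormedAlgebra 𝕜 F]
  {p q r : F} {x : 𝕜} {Φ : 𝕜 → F}

open NormedSpace (exp)

theorem hasDerivAt_exp_neg_of_auxiliary_ode
    (hΦ : HasDerivAt Φ (p * exp (-Φ x) + q * exp (Φ x) + r) x) :
    HasDerivAt (fun y => exp (-Φ y))
      (-(p * exp (-Φ x) ^ 2 + r * exp (-Φ x) + q)) x := by
  have exp_neg_mul_exp : exp (-Φ x) * exp (Φ x) = 1 := by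
    let _ := NormedAlgebra.restrictScalars ℚ ℝ F
    rw [← NormedSpace.exp_add, neg_add_cancel, NormedSpace.exp_zero]
  refine ((hasDerivAt_exp (x := -Φ x)).comp x hΦ.fun_neg).congr_deriv ?_
  linear_combination -q * exp_neg_mul_exp

theorem stmt_10_general (k : F)
    (hΦ : ∀ᶠ y in 𝓝 x, HasDerivAt Φ (p * exp (-Φ y) + q * exp (Φ y) + r) y) :
    IsFoamDrainageWaveAt k (-(k ^ 3 * p * q) + 1 / 4 * k ^ 3 * r ^ 2)
      (fun y => k / 2 * r + k * p * exp (-Φ y)) x := by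
  have hu : ∀ᶠ y in 𝓝 x, HasDerivAt (fun z => r / 2 + p * exp (-Φ z))
      ((r / 2) ^ 2 - p * q - (r / 2 + p * exp (-Φ y)) ^ 2) y :=
    hΦ.mono fun _ hy =>
      hasDerivAt_complete_square_of_riccati (hasDerivAt_exp_neg_of_auxiliary_ode hy)
  convert isFoamDrainageWaveAt_of_riccati k hu using 2 <;> ring

end

/-- The ansatz V = (k/2)·r + k·p·exp(-Φ) with wave speed c = -k³pq + (1/4)k³r²
solves the traveling-wave foam drainage equation
-c·V' + (1/2)k²·V·V'' + 2k·V²·V' + k²·(V')² = 0, provided Φ solves the auxiliary ODE. -/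
theorem stmt_10 (p q r k a b : ℝ) (Φ : ℝ → ℝ)
    (hΦ : ∀ ξ ∈ Set.Ioo a b,
      HasDerivAt Φ (p * Real.exp (-Φ ξ) + q * Real.exp (Φ ξ) + r) ξ)
    (V : ℝ → ℝ) (hV : V = fun ξ => k / 2 * r + k * p * Real.exp (-Φ ξ))
    (c : ℝ) (hc : c = -(k ^ 3 * p * q) + 1 / 4 * k ^ 3 * r ^ 2) :
    ∀ ξ ∈ Set.Ioo a b,
      DifferentiableAt ℝ V ξ ∧ DifferentiableAt ℝ (deriv V) ξ ∧
      -c * deriv V ξ + 1 / 2 * k ^ 2 * V ξ * deriv (deriv V) ξ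
        + 2 * k * V ξ ^ 2 * deriv V ξ + k ^ 2 * deriv V ξ ^ 2 = 0 := by
  subst hV hc
  simp only [Real.exp_eq_exp_ℝ] at hΦ ⊢
  exact fun ξ hξ => stmt_10_general k (eventually_of_mem (isOpen_Ioo.mem_nhds hξ) hΦ)
end

section
/- Let p, q, r, k be real numbers. Suppose Φ is a differentiable real-valued function on an open interval I satisfying the auxiliary ODE Φ'(ξ) = p·exp(−Φ(ξ)) + q·exp(Φ(ξ)) + r for all ξ ∈ I. Define w(ξ) = −6k²pq − 6k²pr·exp(−Φ(ξ)) − 6k²p²·exp(−2Φ(ξ)) and c = k⁴(−8pqr² + r⁴ + 16p²q²). Then w is four times differentiable on I and −c·w(ξ) + (5/3)·w(ξ)³ + 5k²·w(ξ)·w''(ξ) + k⁴·w''''(ξ) = 0 for all ξ ∈ I. -/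
/-!
The function `y = exp (-Φ)` solves the Riccati equation `y' = -(p y² + r y + q)`, and the ansatz is
a multiple of its right-hand side: `w = -6 k² p v` with `v = p y² + r y + q`. Since
`v' = -(2 p y + r) v` and `(2 p y + r)² = 4 p v + D`, where `D = r² - 4 p q`, the function `v`
satisfies the travelling-wave KdV equations `v'² = D v² + 4 p v³` and `v'' = D v + 6 p v²`. They
express the fourth derivative of `v` as a cubic polynomial in `v`, which reduces the Sawada–Kotera
equation to a polynomial identity in `v`; the wave speed is `c = k⁴ D²`.
-/

section

variable {𝕜 : Type*} [NontriviallyNormedField 𝕜] {s : Set 𝕜}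

theorem hasDerivAt_deriv_of_isOpen {F : Type*} [NormedAddCommGroup F] [NormedSpace 𝕜 F]
    {f f' f'' : 𝕜 → F} (hs : IsOpen s) (hf : ∀ x ∈ s, HasDerivAt f (f' x) x)
    (hf' : ∀ x ∈ s, HasDerivAt f' (f'' x) x) :
    ∀ x ∈ s, HasDerivAt (deriv f) (f'' x) x := by
  intro x hx
  have hderiv : Set.EqOn (deriv f) f' s := fun t ht ↦ (hf t ht).deriv
  exact (hf' x hx).congr_of_eventuallyEq (hderiv.eventuallyEq_of_mem (hs.mem_nhds hx))

/-- `v`, with derivative `v'`, is a solitary-wave profile of the Korteweg–de Vries equation on `s`: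
it solves the travelling-wave reduction `v'' = α v + 3 γ v²` with vanishing integration constants,
so that its first integral is `v'² = α v² + 2 γ v³`. The first integral is a separate field because
it follows from the second-order equation only up to a constant. -/
structure IsKdVSolitaryWaveOn (α γ : 𝕜) (v v' : 𝕜 → 𝕜) (s : Set 𝕜) : Prop where
  hasDerivAt : ∀ x ∈ s, HasDerivAt v (v' x) x
  hasDerivAt_deriv : ∀ x ∈ s, HasDerivAt v' (α * v x + 3 * γ * v x ^ 2) x
  first_integral : ∀ x ∈ s, v' x ^ 2 = α * v x ^ 2 + 2 * γ * v x ^ 3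

namespace IsKdVSolitaryWaveOn

variable {α γ : 𝕜} {v v' : 𝕜 → 𝕜}

theorem hasDerivAt_second_deriv (h : IsKdVSolitaryWaveOn α γ v v' s) {x : 𝕜} (hx : x ∈ s) :
    HasDerivAt (fun t ↦ α * v t + 3 * γ * v t ^ 2) ((α + 6 * γ * v x) * v' x) x := by
  have hv := h.hasDerivAt x hx
  refine ((hv.const_mul α).add ((hv.pow 2).const_mul (3 * γ))).congr_deriv ?_
  push_cast
  ring

theorem hasDerivAt_third_deriv (h : IsKdVSolitaryWaveOn α γ v v' s) {x : 𝕜} (hx : x ∈ s) :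
    HasDerivAt (fun t ↦ (α + 6 * γ * v t) * v' t)
      (α ^ 2 * v x + 15 * α * γ * v x ^ 2 + 30 * γ ^ 2 * v x ^ 3) x := by
  have hfactor := ((h.hasDerivAt x hx).const_mul (6 * γ)).const_add α
  refine (hfactor.mul (h.hasDerivAt_deriv x hx)).congr_deriv ?_
  linear_combination 6 * γ * h.first_integral x hx

theorem sawadaKotera [CharZero 𝕜] (h : IsKdVSolitaryWaveOn α γ v v' s) (hs : IsOpen s) {k : 𝕜}
    {w : 𝕜 → 𝕜} (hw : w = fun x ↦ -(3 * k ^ 2 * γ) * v x) {x : 𝕜} (hx : x ∈ s) :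
    (DifferentiableAt 𝕜 w x ∧ DifferentiableAt 𝕜 (deriv w) x ∧
      DifferentiableAt 𝕜 (deriv (deriv w)) x ∧
      DifferentiableAt 𝕜 (deriv (deriv (deriv w))) x) ∧
    -(k ^ 4 * α ^ 2 * w x) + 5 / 3 * w x ^ 3 + 5 * k ^ 2 * w x * deriv (deriv w) x
      + k ^ 4 * deriv (deriv (deriv (deriv w))) x = 0 := by
  subst hw
  have h₁ := fun t ht ↦ (h.hasDerivAt t ht).const_mul (-(3 * k ^ 2 * γ))
  have h₂ := hasDerivAt_deriv_of_isOpen hs h₁ fun t ht ↦ (h.hasDerivAt_deriv t ht).const_mul _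
  have h₃ := hasDerivAt_deriv_of_isOpen hs h₂ fun t ht ↦ (h.hasDerivAt_second_deriv ht).const_mul _
  have h₄ := hasDerivAt_deriv_of_isOpen hs h₃ fun t ht ↦ (h.hasDerivAt_third_deriv ht).const_mul _
  refine ⟨⟨(h₁ x hx).differentiableAt, (h₂ x hx).differentiableAt, (h₃ x hx).differentiableAt,
    (h₄ x hx).differentiableAt⟩, ?_⟩
  rw [(h₂ x hx).deriv, (h₄ x hx).deriv]
  ring

end IsKdVSolitaryWaveOn

theorem isKdVSolitaryWaveOn_of_riccati {p q r : 𝕜} {y : 𝕜 → 𝕜}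
    (hy : ∀ x ∈ s, HasDerivAt y (-(p * y x ^ 2 + r * y x + q)) x) :
    IsKdVSolitaryWaveOn (discrim p r q) (2 * p) (fun x ↦ p * y x ^ 2 + r * y x + q)
      (fun x ↦ -(2 * p * y x + r) * (p * y x ^ 2 + r * y x + q)) s := by
  have hquadratic : ∀ x ∈ s, HasDerivAt (fun t ↦ p * y t ^ 2 + r * y t + q)
      (-(2 * p * y x + r) * (p * y x ^ 2 + r * y x + q)) x := by
    intro x hx
    have hsq := ((hy x hx).pow 2).const_mul p
    refine ((hsq.add ((hy x hx).const_mul r)).add_const q).congr_deriv ?_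
    push_cast
    ring
  refine ⟨hquadratic, fun x hx ↦ ?_, fun x _ ↦ ?_⟩
  · have hslope := (((hy x hx).const_mul (2 * p)).add_const r).fun_neg
    refine (hslope.mul (hquadratic x hx)).congr_deriv ?_
    rw [discrim]
    ring
  · rw [discrim]
    ring

end

theorem hasDerivAt_exp_neg_riccati {p q r ξ : ℝ} {Φ : ℝ → ℝ}
    (hΦ : HasDerivAt Φ (p * Real.exp (-Φ ξ) + q * Real.exp (Φ ξ) + r) ξ) :
    HasDerivAt (fun x ↦ Real.exp (-Φ x))
      (-(p * Real.exp (-Φ ξ) ^ 2 + r * Real.exp (-Φ ξ) + q)) ξ := by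
  have hinv : Real.exp (-Φ ξ) * Real.exp (Φ ξ) = 1 := by
    rw [← Real.exp_add, neg_add_cancel, Real.exp_zero]
  refine hΦ.fun_neg.exp.congr_deriv ?_
  linear_combination -q * hinv

/-- The ansatz w = -6k²pq - 6k²pr·exp(-Φ) - 6k²p²·exp(-2Φ) with wave speed
c = k⁴(-8pqr² + r⁴ + 16p²q²) solves the once-integrated traveling-wave
Sawada–Kotera equation -c·w + (5/3)w³ + 5k²·w·w'' + k⁴·w'''' = 0,
provided Φ solves the auxiliary ODE. -/
theorem stmt_12 (p q r k a b : ℝ) (Φ : ℝ → ℝ)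
    (hΦ : ∀ ξ ∈ Set.Ioo a b,
      HasDerivAt Φ (p * Real.exp (-Φ ξ) + q * Real.exp (Φ ξ) + r) ξ)
    (w : ℝ → ℝ)
    (hw : w = fun ξ => -(6 * k ^ 2 * p * q) - 6 * k ^ 2 * p * r * Real.exp (-Φ ξ)
      - 6 * k ^ 2 * p ^ 2 * Real.exp (-(2 * Φ ξ)))
    (c : ℝ)
    (hc : c = k ^ 4 * (-(8 * p * q * r ^ 2) + r ^ 4 + 16 * p ^ 2 * q ^ 2)) :
    ∀ ξ ∈ Set.Ioo a b,
      (DifferentiableAt ℝ w ξ ∧ DifferentiableAt ℝ (deriv w) ξ ∧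
       DifferentiableAt ℝ (deriv (deriv w)) ξ ∧
       DifferentiableAt ℝ (deriv (deriv (deriv w))) ξ) ∧
      -(c * w ξ) + 5 / 3 * w ξ ^ 3 + 5 * k ^ 2 * w ξ * deriv (deriv w) ξ
        + k ^ 4 * deriv (deriv (deriv (deriv w))) ξ = 0 := by
  have hv := isKdVSolitaryWaveOn_of_riccati fun x hx ↦ hasDerivAt_exp_neg_riccati (hΦ x hx)
  have hw_quadratic : w = fun ξ ↦ -(3 * k ^ 2 * (2 * p)) *
      (p * Real.exp (-Φ ξ) ^ 2 + r * Real.exp (-Φ ξ) + q) := by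
    funext ξ
    have hexp_sq : Real.exp (-(2 * Φ ξ)) = Real.exp (-Φ ξ) ^ 2 := by
      rw [← Real.exp_nat_mul, Nat.cast_ofNat, mul_neg]
    simp only [hw, hexp_sq]
    ring
  have hc_discrim : c = k ^ 4 * discrim p r q ^ 2 := by
    rw [hc, discrim]
    ring
  intro ξ hξ
  rw [hc_discrim]
  exact hv.sawadaKotera isOpen_Ioo hw_quadratic hξ
end

section
/- Let b, ξ₀ be real numbers. Then at every point (x,t) ∈ ℝ × ℝ with sinh(b·x + b³·t + ξ₀) ≠ 0, the function V(x,t) = b·coth(b·x + b³·t + ξ₀) satisfies the foam drainage equation ∂V/∂t = (1/2)·V·∂²V/∂x² + 2V²·∂V/∂x + (∂V/∂x)². -/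
/-!
The profile `w = coth` solves the Riccati equation `w' = 1 - w²`. Rescaled, the wave
`V = b w(b x + b³ t + ξ)` satisfies `Vₓ = b² - V²` and `Vₜ = b² Vₓ`, so that `Vₓₓ = -2 V Vₓ`, and
the foam drainage equation becomes `b² Vₓ = (-V² + 2 V² + Vₓ) Vₓ`, where the bracket is
`V² + (b² - V²) = b²`.
-/

open Filter Topology

section FoamDrainage

variable {𝕜 : Type*} [NontriviallyNormedField 𝕜]

/-- The foam drainage equation `Vₜ = (1/2) V Vₓₓ + 2 V² Vₓ + Vₓ²` for `V` at the point `(x, t)`.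
The derivatives are values of `deriv`, which is `0` where the derivative does not exist;
differentiability is not part of the definition. -/
def SolvesFoamDrainageAt (V : 𝕜 → 𝕜 → 𝕜) (x t : 𝕜) : Prop :=
  deriv (fun t' => V x t') t =
    1 / 2 * V x t * deriv (deriv (fun x' => V x' t)) x
      + 2 * V x t ^ 2 * deriv (fun x' => V x' t) x
      + deriv (fun x' => V x' t) x ^ 2

lemma deriv_deriv_of_riccati {v : 𝕜 → 𝕜} {c x : 𝕜}
    (hv : ∀ᶠ y in 𝓝 x, HasDerivAt v (c - v y ^ 2) y) :
    deriv (deriv v) x = -2 * v x * (c - v x ^ 2) := by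
  have hderiv : deriv v =ᶠ[𝓝 x] fun y => c - v y ^ 2 := hv.mono fun _ hy => hy.deriv
  rw [hderiv.deriv_eq, ((hv.self_of_nhds.fun_pow 2).const_sub c).deriv]
  ring

lemma solvesFoamDrainageAt_of_riccati [NeZero (2 : 𝕜)] {V : 𝕜 → 𝕜 → 𝕜} {c x t : 𝕜}
    (hx : ∀ᶠ y in 𝓝 x, HasDerivAt (fun x' => V x' t) (c - V y t ^ 2) y)
    (ht : HasDerivAt (fun t' => V x t') (c * (c - V x t ^ 2)) t) :
    SolvesFoamDrainageAt V x t := by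
  rw [SolvesFoamDrainageAt, ht.deriv, deriv_deriv_of_riccati hx, hx.self_of_nhds.deriv]
  field_simp
  ring

lemma solvesFoamDrainageAt_travelingWave [NeZero (2 : 𝕜)] {w : 𝕜 → 𝕜} {b ξ x t : 𝕜}
    (hw : ∀ᶠ θ in 𝓝 (b * x + b ^ 3 * t + ξ), HasDerivAt w (1 - w θ ^ 2) θ) :
    SolvesFoamDrainageAt (fun x t => b * w (b * x + b ^ 3 * t + ξ)) x t := by
  have hphase_x (y : 𝕜) : HasDerivAt (fun x' => b * x' + b ^ 3 * t + ξ) b y := by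
    simpa using (((hasDerivAt_id y).const_mul b).add_const (b ^ 3 * t)).add_const ξ
  have hphase_t : HasDerivAt (fun t' => b * x + b ^ 3 * t' + ξ) (b ^ 3) t := by
    simpa using (((hasDerivAt_id t).const_mul (b ^ 3)).const_add (b * x)).add_const ξ
  apply solvesFoamDrainageAt_of_riccati (c := b ^ 2)
  · filter_upwards [(hphase_x x).continuousAt.eventually hw] with y hy
    exact ((hy.comp y (hphase_x y)).const_mul b).congr_deriv (by ring)
  · exact ((hw.self_of_nhds.comp t hphase_t).const_mul b).congr_deriv (by ring)

end FoamDrainage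

lemma hasDerivAt_cosh_div_sinh {θ : ℝ} (hθ : Real.sinh θ ≠ 0) :
    HasDerivAt (fun y => Real.cosh y / Real.sinh y) (1 - (Real.cosh θ / Real.sinh θ) ^ 2) θ :=
  ((Real.hasDerivAt_cosh θ).fun_div (Real.hasDerivAt_sinh θ) hθ).congr_deriv (by field_simp)

/-- V(x,t) = b·coth(b·x + b³·t + ξ₀), where coth θ = cosh θ / sinh θ,
satisfies the foam drainage equation Vₜ = (1/2)V·Vₓₓ + 2V²·Vₓ + Vₓ²
wherever sinh(b·x + b³·t + ξ₀) ≠ 0. -/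
theorem stmt_16 (b ξ₀ : ℝ) (V : ℝ → ℝ → ℝ)
    (hV : V = fun x t => b *
      (Real.cosh (b * x + b ^ 3 * t + ξ₀) / Real.sinh (b * x + b ^ 3 * t + ξ₀))) :
    ∀ x t : ℝ, Real.sinh (b * x + b ^ 3 * t + ξ₀) ≠ 0 →
      deriv (fun t' => V x t') t =
        1 / 2 * V x t * deriv (deriv (fun x' => V x' t)) x
          + 2 * V x t ^ 2 * deriv (fun x' => V x' t) x
          + deriv (fun x' => V x' t) x ^ 2 := by
  subst hV
  intro x t hsinh
  have hsinh_near : ∀ᶠ θ in 𝓝 (b * x + b ^ 3 * t + ξ₀), Real.sinh θ ≠ 0 :=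
    Real.continuous_sinh.continuousAt.eventually_ne hsinh
  exact solvesFoamDrainageAt_travelingWave
    (hsinh_near.mono fun _ => hasDerivAt_cosh_div_sinh)
end

section
/- Let b, ξ₀ be real numbers. Then the function U : ℝ × ℝ → ℝ defined by U(x,t) = 6b²·sech²(b·x − 16b⁵·t + ξ₀) (where sech(θ) = 1/cosh(θ)) is smooth and satisfies the fifth-order Sawada–Kotera equation ∂U/∂t + 5U²·∂U/∂x + 5·∂U/∂x·∂²U/∂x² + 5U·∂³U/∂x³ + ∂⁵U/∂x⁵ = 0 at every point (x,t) ∈ ℝ × ℝ. -/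
/-!
Differentiating the Korteweg–de Vries profile equation `f'' = l + k f - f ^ 2` three more times
expresses the third and fifth derivatives of `f` through `f` and `f'`, and then all terms of
`5 f ^ 2 f' + 5 f' f'' + 5 f f''' + f'''''` cancel except `(k ^ 2 - l) f'`. Hence `f (x - c t)` with
`c = k ^ 2 - l` solves the Sawada–Kotera equation. The profile `6 b ^ 2 sech ^ 2 (b z + ξ)` is the
case `k = 4 b ^ 2`, `l = 0`, for which the wave speed is `16 b ^ 4`.
-/

section TravelingWave

variable {𝕜 : Type*} [NontriviallyNormedField 𝕜]

theorem deriv_travelingWave (f : 𝕜 → 𝕜) (c x t : 𝕜) :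
    deriv (fun t' => f (x - c * t')) t = -(c * deriv f (x - c * t)) := by
  rw [deriv_comp_mul_left c (fun s => f (x - s)) t, deriv_comp_const_sub, smul_eq_mul, mul_neg]

/-- `f` satisfies the traveling-wave equation `f'' = l + k f - f ^ 2`, with `f'` as its derivative.
It is the integrated form, with constant `l`, of the equation for profiles of waves of speed `k` of
the Korteweg–de Vries equation `u_t + 2 u u_x + u_xxx = 0`. Differentiability is part of the
predicate, so no derivative in it is a junk value. -/
structure IsKdVProfile (k l : 𝕜) (f f' : 𝕜 → 𝕜) : Prop where
  hasDerivAt : ∀ z, HasDerivAt f (f' z) z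
  hasDerivAt_deriv : ∀ z, HasDerivAt f' (l + k * f z - f z ^ 2) z

namespace IsKdVProfile

variable {k l : 𝕜} {f f' : 𝕜 → 𝕜}

protected theorem iteratedDeriv_one (h : IsKdVProfile k l f f') : iteratedDeriv 1 f = f' := by
  rw [iteratedDeriv_one]
  exact funext fun z => (h.hasDerivAt z).deriv

protected theorem iteratedDeriv_two (h : IsKdVProfile k l f f') :
    iteratedDeriv 2 f = fun z => l + k * f z - f z ^ 2 := by
  rw [iteratedDeriv_succ, h.iteratedDeriv_one]
  exact funext fun z => (h.hasDerivAt_deriv z).deriv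

protected theorem iteratedDeriv_three (h : IsKdVProfile k l f f') :
    iteratedDeriv 3 f = fun z => (k - 2 * f z) * f' z := by
  rw [iteratedDeriv_succ, h.iteratedDeriv_two]
  funext z
  have hf := h.hasDerivAt z
  refine ((((hf.const_mul k).const_add l).sub (hf.fun_pow 2)).congr_deriv ?_).deriv
  ring

protected theorem iteratedDeriv_four (h : IsKdVProfile k l f f') :
    iteratedDeriv 4 f = fun z =>
      (k - 2 * f z) * (l + k * f z - f z ^ 2) - 2 * f' z ^ 2 := by
  rw [iteratedDeriv_succ, h.iteratedDeriv_three]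
  funext z
  have hf := h.hasDerivAt z
  refine ((((hf.const_mul 2).const_sub k).mul (h.hasDerivAt_deriv z)).congr_deriv ?_).deriv
  ring

protected theorem iteratedDeriv_five (h : IsKdVProfile k l f f') :
    iteratedDeriv 5 f = fun z =>
      ((k - 2 * f z) ^ 2 - 6 * (l + k * f z - f z ^ 2)) * f' z := by
  rw [iteratedDeriv_succ, h.iteratedDeriv_four]
  funext z
  have hf := h.hasDerivAt z
  have hf' := h.hasDerivAt_deriv z
  have hf'' := ((hf.const_mul k).const_add l).sub (hf.fun_pow 2)
  refine (((((hf.const_mul 2).const_sub k).mul hf'').sub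
    ((hf'.fun_pow 2).const_mul 2)).congr_deriv ?_).deriv
  simp only [Pi.sub_apply]
  ring

theorem sawadaKotera_profile (h : IsKdVProfile k l f f') (z : 𝕜) :
    5 * f z ^ 2 * iteratedDeriv 1 f z
      + 5 * iteratedDeriv 1 f z * iteratedDeriv 2 f z
      + 5 * f z * iteratedDeriv 3 f z
      + iteratedDeriv 5 f z = (k ^ 2 - l) * iteratedDeriv 1 f z := by
  rw [h.iteratedDeriv_one, h.iteratedDeriv_two, h.iteratedDeriv_three, h.iteratedDeriv_five]
  ring

theorem sawadaKotera_travelingWave (h : IsKdVProfile k l f f') {c : 𝕜} (hc : c = k ^ 2 - l)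
    (x t : 𝕜) :
    deriv (fun t' => f (x - c * t')) t
      + 5 * f (x - c * t) ^ 2 * iteratedDeriv 1 (fun x' => f (x' - c * t)) x
      + 5 * iteratedDeriv 1 (fun x' => f (x' - c * t)) x
          * iteratedDeriv 2 (fun x' => f (x' - c * t)) x
      + 5 * f (x - c * t) * iteratedDeriv 3 (fun x' => f (x' - c * t)) x
      + iteratedDeriv 5 (fun x' => f (x' - c * t)) x = 0 := by
  simp only [deriv_travelingWave, iteratedDeriv_comp_sub_const]
  have hprofile := h.sawadaKotera_profile (x - c * t)
  rw [← hc] at hprofile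
  rw [← iteratedDeriv_one (f := f)]
  linear_combination hprofile

end IsKdVProfile

end TravelingWave

section SechSquared

theorem contDiff_sech_sq {n : WithTop ℕ∞} :
    ContDiff ℝ n (fun θ : ℝ => (1 / Real.cosh θ) ^ 2) :=
  (contDiff_const.div Real.contDiff_cosh fun θ => (Real.cosh_pos θ).ne').pow 2

theorem hasDerivAt_sech_sq (θ : ℝ) :
    HasDerivAt (fun θ => (1 / Real.cosh θ) ^ 2) (-2 * Real.sinh θ / Real.cosh θ ^ 3) θ := by
  have hcosh := (Real.cosh_pos θ).ne'
  refine (((hasDerivAt_const θ (1 : ℝ)).fun_div (Real.hasDerivAt_cosh θ) hcosh).fun_pow 2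
    |>.congr_deriv ?_)
  simp only [Nat.add_one_sub_one, pow_one]
  field_simp
  ring

theorem hasDerivAt_deriv_sech_sq (θ : ℝ) :
    HasDerivAt (fun θ => -2 * Real.sinh θ / Real.cosh θ ^ 3)
      (4 * (1 / Real.cosh θ) ^ 2 - 6 * (1 / Real.cosh θ) ^ 4) θ := by
  have hcosh := (Real.cosh_pos θ).ne'
  refine (((Real.hasDerivAt_sinh θ).const_mul (-2)).fun_div
    ((Real.hasDerivAt_cosh θ).fun_pow 3) (pow_ne_zero 3 hcosh)).congr_deriv ?_
  field_simp
  rw [Real.sinh_sq]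
  ring

/-- The wave profile `6 b ^ 2 sech ^ 2 (b z + ξ)` of the Sawada–Kotera soliton, with `sech` written
as `1 / cosh`. -/
noncomputable def solitonProfile (b ξ z : ℝ) : ℝ :=
  6 * b ^ 2 * (1 / Real.cosh (b * z + ξ)) ^ 2

theorem contDiff_solitonProfile (b ξ : ℝ) {n : WithTop ℕ∞} :
    ContDiff ℝ n (solitonProfile b ξ) :=
  contDiff_const.mul (contDiff_sech_sq.comp (by fun_prop))

theorem isKdVProfile_solitonProfile (b ξ : ℝ) :
    IsKdVProfile (4 * b ^ 2) 0 (solitonProfile b ξ)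
      (fun z => 6 * b ^ 3 * (-2 * Real.sinh (b * z + ξ) / Real.cosh (b * z + ξ) ^ 3)) := by
  have hphase (z : ℝ) : HasDerivAt (fun z => b * z + ξ) b z := by
    simpa using ((hasDerivAt_id z).const_mul b).add_const ξ
  constructor <;> intro z
  · refine (((hasDerivAt_sech_sq _).comp z (hphase z)).const_mul (6 * b ^ 2)).congr_deriv ?_
    ring
  · refine (((hasDerivAt_deriv_sech_sq _).comp z (hphase z)).const_mul (6 * b ^ 3)).congr_deriv ?_
    simp only [solitonProfile]
    ring

end SechSquared

/-- The soliton U(x,t) = 6b²·sech²(b·x - 16b⁵·t + ξ₀), where sech θ = 1/cosh θ,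
is a smooth exact solution of the fifth-order Sawada–Kotera equation
Uₜ + 5U²·Uₓ + 5·Uₓ·Uₓₓ + 5U·Uₓₓₓ + Uₓₓₓₓₓ = 0. -/
theorem stmt_18 (b ξ₀ : ℝ) (U : ℝ → ℝ → ℝ)
    (hU : U = fun x t => 6 * b ^ 2 *
      (1 / Real.cosh (b * x - 16 * b ^ 5 * t + ξ₀)) ^ 2) :
    ContDiff ℝ (⊤ : ℕ∞) (fun X : ℝ × ℝ => U X.1 X.2) ∧
    ∀ x t : ℝ,
      deriv (fun t' => U x t') t
        + 5 * U x t ^ 2 * iteratedDeriv 1 (fun x' => U x' t) x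
        + 5 * iteratedDeriv 1 (fun x' => U x' t) x * iteratedDeriv 2 (fun x' => U x' t) x
        + 5 * U x t * iteratedDeriv 3 (fun x' => U x' t) x
        + iteratedDeriv 5 (fun x' => U x' t) x = 0 := by
  have hwave : U = fun x t => solitonProfile b ξ₀ (x - 16 * b ^ 4 * t) := by
    rw [hU]
    funext x t
    have hphase : b * x - 16 * b ^ 5 * t + ξ₀ = b * (x - 16 * b ^ 4 * t) + ξ₀ := by ring
    rw [solitonProfile, hphase]
  subst hwave
  have hspeed : 16 * b ^ 4 = (4 * b ^ 2) ^ 2 - 0 := by ring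
  exact ⟨(contDiff_solitonProfile b ξ₀).comp (by fun_prop),
    (isKdVProfile_solitonProfile b ξ₀).sawadaKotera_travelingWave hspeed⟩
end
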